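/- arXiv:2401.07308 — 2 statements merged into one kernel-verified Lean document; each statement's English description precedes it below -/
import Mathlib

section
/- Let σ be a well-formed step sequence of an acyclic net AN. Then the scenario induced by σ is a scenario of AN, and σ is a maximal step sequence of the induced scenario: scenario_AN(σ) ∈ scenarios(AN) and σ ∈ maxsseq(scenario_AN(σ)). -/
/-- A net: a triple of places, transitions, and a flow relation. -/
structure Net (α : Type*) where
  places : Set α
  transitions : Set α
  flow : α → α → Prop

namespace Net

variable {α : Type*}

/-- The set of direct predecessors (preset) of a node. -/
def pre (N : Net α) (x : α) : Set α := {z | N.flow z x}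

/-- The set of direct successors (postset) of a node. -/
def post (N : Net α) (x : α) : Set α := {z | N.flow x z}

/-- Preset of a set of nodes. -/
def preSet (N : Net α) (X : Set α) : Set α := ⋃ x ∈ X, N.pre x

/-- Postset of a set of nodes. -/
def postSet (N : Net α) (X : Set α) : Set α := ⋃ x ∈ X, N.post x

/-- Initial places: places with empty preset. -/
def initPlaces (N : Net α) : Set α := {p ∈ N.places | N.pre p = ∅}

/-- Final places: places with empty postset. -/
def finPlaces (N : Net α) : Set α := {p ∈ N.places | N.post p = ∅}

/-- An acyclic net: places and transitions are disjoint finite sets, places nonempty,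
the flow relation relates only places to transitions and vice versa, is acyclic, and
every transition has at least one pre-place and one post-place. -/
def IsAcyclicNet (N : Net α) : Prop :=
  N.places.Finite ∧ N.transitions.Finite ∧
  Disjoint N.places N.transitions ∧
  (∀ x y, N.flow x y →
    (x ∈ N.places ∧ y ∈ N.transitions) ∨ (x ∈ N.transitions ∧ y ∈ N.places)) ∧
  N.places.Nonempty ∧
  (∀ x, ¬ Relation.TransGen N.flow x x) ∧
  (∀ t ∈ N.transitions, (N.pre t).Nonempty ∧ (N.post t).Nonempty)

/-- An occurrence net: an acyclic net with `|pre p| ≤ 1` and `|post p| ≤ 1` for each place. -/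
def IsOccurrenceNet (N : Net α) : Prop :=
  IsAcyclicNet N ∧ ∀ p ∈ N.places, (N.pre p).Subsingleton ∧ (N.post p).Subsingleton

/-- A backward deterministic acyclic net: an acyclic net with `|pre p| ≤ 1` for each place. -/
def IsBDAN (N : Net α) : Prop :=
  IsAcyclicNet N ∧ ∀ p ∈ N.places, (N.pre p).Subsingleton

/-- `N` is a subnet of `M`: nonempty set of places included, transitions included,
flow is the restriction of that of `M`, and every transition of `N` retains its
full preset and postset from `M`. -/
def IsSubnet (N M : Net α) : Prop :=
  N.places.Nonempty ∧ N.places ⊆ M.places ∧ N.transitions ⊆ M.transitions ∧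
  (∀ x y, N.flow x y ↔ M.flow x y ∧
    ((x ∈ N.places ∧ y ∈ N.transitions) ∨ (x ∈ N.transitions ∧ y ∈ N.places))) ∧
  (∀ t ∈ N.transitions, N.pre t = M.pre t ∧ N.post t = M.post t)

/-- `N` is a co-initial subnet of `M` : a subnet with the same initial places. -/
def CoInitial (N M : Net α) : Prop := IsSubnet N M ∧ N.initPlaces = M.initPlaces

/-- A step: a nonempty set of transitions with pairwise disjoint presets. -/
def IsStep (N : Net α) (U : Set α) : Prop :=
  U.Nonempty ∧ U ⊆ N.transitions ∧ ∀ t ∈ U, ∀ u ∈ U, t ≠ u → N.pre t ∩ N.pre u = ∅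

/-- A step `U` is enabled at marking `M` if all its pre-places are in `M`. -/
def Enabled (N : Net α) (M U : Set α) : Prop := IsStep N U ∧ N.preSet U ⊆ M

/-- Executing an enabled step `U` at `M` yields `M' = (M ∪ post U) \ pre U`. -/
def StepTrans (N : Net α) (M U M' : Set α) : Prop :=
  Enabled N M U ∧ M' = (M ∪ N.postSet U) \ N.preSet U

/-- Step sequences from a marking to a marking. -/
inductive StepSeqFrom (N : Net α) : Set α → List (Set α) → Set α → Prop
  | nil (M : Set α) : StepSeqFrom N M [] M
  | cons {M U M' σ M''} : StepTrans N M U M' → StepSeqFrom N M' σ M'' →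
      StepSeqFrom N M (U :: σ) M''

/-- The initial marking: the set of initial places. -/
def initMarking (N : Net α) : Set α := N.initPlaces

/-- Step sequences executable from the initial marking. -/
def sseq (N : Net α) : Set (List (Set α)) := {σ | ∃ M, StepSeqFrom N N.initMarking σ M}

/-- Mixed step sequences: alternating steps and resulting markings from a marking. -/
inductive MixFrom (N : Net α) : Set α → List (Set α × Set α) → Prop
  | nil (M : Set α) : MixFrom N M []
  | cons {M U M' l} : StepTrans N M U M' → MixFrom N M' l → MixFrom N M ((U, M') :: l)

/-- Mixed step sequences from the initial marking, represented as the initial marking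
paired with the list of consecutive (step, marking) pairs. -/
def mixsseq (N : Net α) : Set (Set α × List (Set α × Set α)) :=
  {p | p.1 = N.initMarking ∧ MixFrom N p.1 p.2}

/-- Markings reachable from the initial marking. -/
def reach (N : Net α) : Set (Set α) := {M | ∃ σ, StepSeqFrom N N.initMarking σ M}

/-- Firing sequences: step sequences all of whose steps are singletons. -/
def fseq (N : Net α) : Set (List (Set α)) :=
  {σ | σ ∈ N.sseq ∧ ∀ U ∈ σ, ∃ t, U = {t}}

/-- Maximal step sequences: no step can be appended. -/
def maxsseq (N : Net α) : Set (List (Set α)) :=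
  {σ | σ ∈ N.sseq ∧ ¬ ∃ U, σ ++ [U] ∈ N.sseq}

/-- Maximal mixed step sequences: no step and marking can be appended. -/
def maxmixsseq (N : Net α) : Set (Set α × List (Set α × Set α)) :=
  {p | p ∈ N.mixsseq ∧ ¬ ∃ U M, (p.1, p.2 ++ [(U, M)]) ∈ N.mixsseq}

/-- Final reachable markings: markings reached by maximal step sequences. -/
def finreach (N : Net α) : Set (Set α) :=
  {M | ∃ σ ∈ N.maxsseq, StepSeqFrom N N.initMarking σ M}

/-- A step sequence is well-formed if post-sets of distinct transitions in the same
step are disjoint, and post-sets of distinct steps are disjoint. -/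
def WellFormedSeq (N : Net α) (σ : List (Set α)) : Prop :=
  (∀ U ∈ σ, ∀ t ∈ U, ∀ u ∈ U, t ≠ u → N.post t ∩ N.post u = ∅) ∧
  σ.Pairwise (fun U V => N.postSet U ∩ N.postSet V = ∅)

/-- The set of transitions occurring in a step sequence. -/
def transOf (σ : List (Set α)) : Set α := {t | ∃ U ∈ σ, t ∈ U}

/-- A net is well-formed if each transition occurs in at least one step sequence and
all step sequences are well-formed. -/
def WellFormedNet (N : Net α) : Prop :=
  (∀ t ∈ N.transitions, ∃ σ ∈ N.sseq, t ∈ transOf σ) ∧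
  (∀ σ ∈ N.sseq, N.WellFormedSeq σ)

/-- Scenarios of a net: occurrence nets that are co-initial subnets of it. -/
def scenarios (N : Net α) : Set (Net α) :=
  {S | IsOccurrenceNet S ∧ CoInitial S N}

/-- Maximal scenarios: scenarios not strictly included (co-initially) in another scenario. -/
def maxscenarios (N : Net α) : Set (Net α) :=
  {S | S ∈ N.scenarios ∧ ¬ ∃ S', S' ∈ N.scenarios ∧ S' ≠ S ∧ CoInitial S S'}

/-- The scenario induced by a (well-formed) step sequence `σ`:
transitions are those occurring in `σ`, places are the initial places together with
the postsets of those transitions, and the flow is the restriction. -/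
def inducedScenario (N : Net α) (σ : List (Set α)) : Net α where
  places := N.initMarking ∪ N.postSet (transOf σ)
  transitions := transOf σ
  flow := fun x y => N.flow x y ∧
    ((x ∈ N.initMarking ∪ N.postSet (transOf σ) ∧ y ∈ transOf σ) ∨
     (x ∈ transOf σ ∧ y ∈ N.initMarking ∪ N.postSet (transOf σ)))

end Net
namespace Net

variable {α : Type*}

lemma mem_preSet {N : Net α} {X : Set α} {p : α} : p ∈ N.preSet X ↔ ∃ t ∈ X, N.flow p t := by
  simp [preSet, pre]

lemma mem_postSet {N : Net α} {X : Set α} {p : α} : p ∈ N.postSet X ↔ ∃ t ∈ X, N.flow t p := by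
  simp [postSet, post]

/-- Unmarked places that are never produced are never consumed nor marked. -/
lemma dead_aux {N : Net α} {M M' : Set α} {σ : List (Set α)} (hs : StepSeqFrom N M σ M')
    (p : α) (hp : p ∉ M) (hpost : ∀ U ∈ σ, p ∉ N.postSet U) :
    (∀ U ∈ σ, p ∉ N.preSet U) ∧ p ∉ M' := by
  induction hs with
  | nil M => simp [hp]
  | @cons M U M1 σ M2 hst _ ih =>
    obtain ⟨⟨_, hen⟩, rfl⟩ := hst
    have h1 := hpost U (by simp)
    have := ih (fun hh => by rcases hh.1 with h | h <;> contradiction)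
      (fun V hV => hpost V (by simp [hV]))
    refine ⟨?_, this.2⟩
    intro V hV
    rcases List.mem_cons.1 hV with rfl | hV
    · exact fun hh => hp (hen hh)
    · exact this.1 V hV

lemma main_aux {N : Net α} {M M' : Set α} {σ : List (Set α)} (hs : StepSeqFrom N M σ M')
    (hM : ∀ U ∈ σ, ∀ p ∈ M, p ∉ N.postSet U)
    (hpw : σ.Pairwise (fun U V => N.postSet U ∩ N.postSet V = ∅)) :
    (∀ U ∈ σ, IsStep N U) ∧
    (∀ U ∈ σ, ∀ p ∈ N.preSet U, p ∈ M ∨ ∃ V ∈ σ, p ∈ N.postSet V) ∧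
    σ.Pairwise (fun U V => N.preSet U ∩ N.preSet V = ∅) ∧
    (∀ U ∈ σ, ∀ p ∈ N.preSet U, p ∉ M') := by
  induction hs with
  | nil M => simp
  | @cons M U M1 σ M2 hst hrest ih =>
    obtain ⟨⟨hstep, hen⟩, rfl⟩ := hst
    rw [List.pairwise_cons] at hpw
    have hdead : ∀ p ∈ N.preSet U, (∀ V ∈ σ, p ∉ N.preSet V) ∧ p ∉ M2 := fun p hp =>
      dead_aux hrest p (fun hh => hh.2 hp) (fun V hV => hM V (by simp [hV]) p (hen hp))
    obtain ⟨i1, i2, i3, i4⟩ := ih (by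
      rintro V hV p ⟨hp | hp, _⟩ hpV
      · exact hM V (by simp [hV]) p hp hpV
      · exact (Set.eq_empty_iff_forall_notMem.1 (hpw.1 V hV)) p ⟨hp, hpV⟩) hpw.2
    refine ⟨?_, ?_, ?_, ?_⟩
    · intro V hV
      rcases List.mem_cons.1 hV with rfl | hV
      · exact hstep
      · exact i1 V hV
    · intro V hV p hp
      rcases List.mem_cons.1 hV with rfl | hV
      · exact Or.inl (hen hp)
      · rcases i2 V hV p hp with ⟨h | h, _⟩ | ⟨W, hW, h⟩
        · exact Or.inl h
        · exact Or.inr ⟨U, by simp, h⟩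
        · exact Or.inr ⟨W, by simp [hW], h⟩
    · refine List.pairwise_cons.2 ⟨fun V hV => ?_, i3⟩
      exact Set.eq_empty_iff_forall_notMem.2 fun p hp => (hdead p hp.1).1 V hV hp.2
    · intro V hV p hp
      rcases List.mem_cons.1 hV with rfl | hV
      · exact (hdead p hp).2
      · exact i4 V hV p hp

lemma transfer {N S : Net α} {M M' : Set α} {σ : List (Set α)} (hs : StepSeqFrom N M σ M')
    (hT : ∀ U ∈ σ, U ⊆ S.transitions)
    (hpp : ∀ t ∈ S.transitions, S.pre t = N.pre t ∧ S.post t = N.post t) :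
    StepSeqFrom S M σ M' := by
  induction hs with
  | nil M => exact .nil M
  | @cons M U M1 σ M2 hst hrest ih =>
    obtain ⟨⟨⟨h1, h2, h3⟩, hen⟩, rfl⟩ := hst
    have hU := hT U (by simp)
    have e1 : S.preSet U = N.preSet U := by
      unfold preSet
      exact Set.iUnion₂_congr fun t ht => (hpp t (hU ht)).1
    have e2 : S.postSet U = N.postSet U := by
      unfold postSet
      exact Set.iUnion₂_congr fun t ht => (hpp t (hU ht)).2
    refine .cons ⟨⟨⟨h1, hU, ?_⟩, ?_⟩, rfl⟩ ?_
    · intro t ht u hu hne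
      rw [(hpp t (hU ht)).1, (hpp u (hU hu)).1]
      exact h3 t ht u hu hne
    · rw [e1]; exact hen
    · rw [e1, e2]; exact ih (fun V hV => hT V (by simp [hV]))

lemma append_inv {N : Net α} {σ : List (Set α)} {U : Set α} : ∀ {M M' M'' : Set α},
    StepSeqFrom N M σ M' → StepSeqFrom N M (σ ++ [U]) M'' → Enabled N M' U := by
  intro M M' M'' hs
  induction hs with
  | nil M =>
    intro h
    cases h with
    | cons h _ => exact h.1
  | cons hst hrest ih =>
    intro h
    cases h with
    | cons h h' =>
      obtain ⟨_, rfl⟩ := hst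
      obtain ⟨_, rfl⟩ := h
      exact ih h'

lemma pairwise_use (f : Set α → Set α) {σ : List (Set α)}
    (hp : σ.Pairwise (fun U V => f U ∩ f V = ∅)) {U V : Set α} (hU : U ∈ σ) (hV : V ∈ σ)
    (hne : U ≠ V) : f U ∩ f V = ∅ := by
  induction hp with
  | nil => simp at hU
  | @cons a l ha _ ih =>
    rcases List.mem_cons.1 hU with rfl | hU' <;> rcases List.mem_cons.1 hV with rfl | hV'
    · exact absurd rfl hne
    · exact ha _ hV'
    · rw [Set.inter_comm]; exact ha _ hU'
    · exact ih hU' hV'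

lemma exists_start_place {N : Net α} (h : N.IsAcyclicNet) : N.initPlaces.Nonempty := by
  obtain ⟨hPf, hTf, hdisj, hflow, hne, hac, htr⟩ := h
  have : IsStrictOrder α (Relation.TransGen N.flow) :=
    { irrefl := hac, trans := fun _ _ _ => Relation.TransGen.trans }
  have hwf := hPf.wellFoundedOn (r := Relation.TransGen N.flow)
  obtain ⟨q0, hq0⟩ := hne
  obtain ⟨m, hm, hmin⟩ := WellFounded.has_min hwf Set.univ ⟨⟨q0, hq0⟩, trivial⟩
  refine ⟨m.1, m.2, Set.eq_empty_iff_forall_notMem.2 fun t ht => ?_⟩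
  rcases hflow _ _ ht with ⟨_, h2⟩ | ⟨h1, _⟩
  · exact Set.disjoint_left.1 hdisj m.2 h2
  · obtain ⟨q, hq⟩ := (htr t h1).1
    rcases hflow _ _ hq with ⟨h3, _⟩ | ⟨_, h3⟩
    · exact hmin ⟨q, h3⟩ trivial (Relation.TransGen.tail (.single hq) ht)
    · exact Set.disjoint_left.1 hdisj h3 h1

end Net

/-- For a well-formed step sequence `σ` of an acyclic net `AN`,
`scenario_AN(σ) ∈ scenarios(AN)` and `σ ∈ maxsseq(scenario_AN(σ))`. -/
theorem stmt12 {α : Type*} (N : Net α) (h : N.IsAcyclicNet) (σ : List (Set α))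
    (hσ : σ ∈ N.sseq) (hwf : N.WellFormedSeq σ) :
    N.inducedScenario σ ∈ N.scenarios ∧ σ ∈ (N.inducedScenario σ).maxsseq := by
  have hStartNe := Net.exists_start_place h
  obtain ⟨hPf, hTf, hdisj, hflow, hne, hac, htr⟩ := h
  obtain ⟨M', hs⟩ := hσ
  obtain ⟨m1, m2, m3, m4⟩ := Net.main_aux hs (by
    rintro U _ p ⟨_, hp⟩ hpU
    obtain ⟨t, _, ht⟩ := Net.mem_postSet.1 hpU
    exact (Set.eq_empty_iff_forall_notMem.1 hp) t ht) hwf.2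
  have hT : Net.transOf σ ⊆ N.transitions := by
    rintro t ⟨U, hU, ht⟩
    exact (m1 U hU).2.1 ht
  have hPl : N.initMarking ∪ N.postSet (Net.transOf σ) ⊆ N.places := by
    rintro p (hp | hp)
    · exact hp.1
    · obtain ⟨t, ht, htp⟩ := Net.mem_postSet.1 hp
      rcases hflow _ _ htp with ⟨h1, _⟩ | ⟨_, h1⟩
      · exact absurd (hT ht) (Set.disjoint_left.1 hdisj h1)
      · exact h1
  have hpp : ∀ t ∈ (N.inducedScenario σ).transitions,
      (N.inducedScenario σ).pre t = N.pre t ∧ (N.inducedScenario σ).post t = N.post t := by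
    intro t ht
    constructor
    · ext p
      refine ⟨fun hp => hp.1, fun hp => ⟨hp, Or.inl ⟨?_, ht⟩⟩⟩
      obtain ⟨U, hU, htU⟩ := ht
      rcases m2 U hU p (Net.mem_preSet.2 ⟨t, htU, hp⟩) with h | ⟨V, hV, h⟩
      · exact Or.inl h
      · obtain ⟨u, hu, hup⟩ := Net.mem_postSet.1 h
        exact Or.inr (Net.mem_postSet.2 ⟨u, ⟨V, hV, hu⟩, hup⟩)
    · ext p
      exact ⟨fun hp => hp.1, fun hp => ⟨hp, Or.inr ⟨ht, Or.inr (Net.mem_postSet.2 ⟨t, ht, hp⟩)⟩⟩⟩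
  have hpostu : ∀ t ∈ Net.transOf σ, ∀ u ∈ Net.transOf σ, ∀ p, N.flow t p → N.flow u p → t = u := by
    rintro t ⟨U, hU, ht⟩ u ⟨V, hV, hu⟩ p htp hup
    by_contra hne
    by_cases hUV : U = V
    · subst hUV
      exact (Set.eq_empty_iff_forall_notMem.1 (hwf.1 U hU t ht u hu hne)) p ⟨htp, hup⟩
    · have := Net.pairwise_use N.postSet hwf.2 hU hV hUV
      exact (Set.eq_empty_iff_forall_notMem.1 this) p
        ⟨Net.mem_postSet.2 ⟨t, ht, htp⟩, Net.mem_postSet.2 ⟨u, hu, hup⟩⟩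
  have hpreu : ∀ t ∈ Net.transOf σ, ∀ u ∈ Net.transOf σ, ∀ p, N.flow p t → N.flow p u → t = u := by
    rintro t ⟨U, hU, ht⟩ u ⟨V, hV, hu⟩ p htp hup
    by_contra hne
    by_cases hUV : U = V
    · subst hUV
      exact (Set.eq_empty_iff_forall_notMem.1 ((m1 U hU).2.2 t ht u hu hne)) p ⟨htp, hup⟩
    · have := Net.pairwise_use N.preSet m3 hU hV hUV
      exact (Set.eq_empty_iff_forall_notMem.1 this) p
        ⟨Net.mem_preSet.2 ⟨t, ht, htp⟩, Net.mem_preSet.2 ⟨u, hu, hup⟩⟩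
  have hnt : ∀ p ∈ N.initMarking ∪ N.postSet (Net.transOf σ), p ∉ Net.transOf σ :=
    fun p hp hpt => Set.disjoint_left.1 hdisj (hPl hp) (hT hpt)
  have hnonempty : (N.inducedScenario σ).places.Nonempty := hStartNe.mono Set.subset_union_left
  have hI : (N.inducedScenario σ).initPlaces = N.initPlaces := by
    ext p
    constructor
    · rintro ⟨hp | hp, he⟩
      · exact hp
      · obtain ⟨t, ht, htp⟩ := Net.mem_postSet.1 hp
        exact absurd (show t ∈ (N.inducedScenario σ).pre p from ⟨htp, Or.inr ⟨ht, Or.inr hp⟩⟩)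
          (Set.eq_empty_iff_forall_notMem.1 he t)
    · intro hp
      refine ⟨Or.inl hp, Set.eq_empty_iff_forall_notMem.2 fun t ht => ?_⟩
      exact Set.eq_empty_iff_forall_notMem.1 hp.2 t ht.1
  have hTs : ∀ U ∈ σ, U ⊆ (N.inducedScenario σ).transitions := fun U hU t ht => ⟨U, hU, ht⟩
  have hs' : Net.StepSeqFrom (N.inducedScenario σ) (N.inducedScenario σ).initMarking σ M' := by
    have := Net.transfer hs hTs hpp
    rw [Net.initMarking, hI]
    exact this
  refine ⟨⟨⟨⟨hPf.subset hPl, hTf.subset hT, hdisj.mono hPl hT, fun x y hxy => hxy.2, hnonempty,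
    ?_, ?_⟩, ?_⟩, ⟨hnonempty, hPl, hT, fun x y => Iff.rfl, hpp⟩, hI⟩, ⟨M', hs'⟩, ?_⟩
  · intro x hx
    exact hac x (Relation.TransGen.mono (fun _ _ hab => hab.1) _ _ hx)
  · intro t ht
    rw [(hpp t ht).1, (hpp t ht).2]
    exact htr t (hT ht)
  · intro p hp
    constructor
    · rintro t ⟨ht, ht'⟩ u ⟨hu, hu'⟩
      have a : t ∈ Net.transOf σ := ht'.elim (fun h => absurd h.2 (hnt p hp)) (fun h => h.1)
      have b : u ∈ Net.transOf σ := hu'.elim (fun h => absurd h.2 (hnt p hp)) (fun h => h.1)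
      exact hpostu t a u b p ht hu
    · rintro t ⟨ht, ht'⟩ u ⟨hu, hu'⟩
      have a : t ∈ Net.transOf σ := ht'.elim (fun h => h.2) (fun h => absurd h.1 (hnt p hp))
      have b : u ∈ Net.transOf σ := hu'.elim (fun h => h.2) (fun h => absurd h.1 (hnt p hp))
      exact hpreu t a u b p ht hu
  · rintro ⟨U, M'', hU⟩
    obtain ⟨⟨⟨t, ht⟩, hsub, _⟩, hen⟩ := Net.append_inv hs' hU
    have htT := hsub ht
    obtain ⟨p, hp⟩ := (htr t (hT htT)).1
    have hpM : p ∈ M' := hen (Net.mem_preSet.2 ⟨t, ht, by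
      have : p ∈ (N.inducedScenario σ).pre t := by rw [(hpp t htT).1]; exact hp
      exact this⟩)
    obtain ⟨V, hV, htV⟩ := htT
    exact m4 V hV p (Net.mem_preSet.2 ⟨t, htV, hp⟩) hpM
end

section
/- Let AN be a well-formed acyclic net. Then: (1) the set of scenarios of AN is exactly the set of scenarios induced by the step sequences of AN, i.e., scenarios(AN) = scenario_AN(sseq(AN)); and (2) the set of maximal scenarios of AN is exactly the set of scenarios induced by the maximal step sequences of AN, i.e., maxscenarios(AN) = scenario_AN(maxsseq(AN)). -/
namespace Net

variable {α : Type*}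

lemma transOf_append (σ : List (Set α)) (U : Set α) :
    transOf (σ ++ [U]) = transOf σ ∪ U := by
  ext t
  simp only [transOf, List.mem_append, List.mem_singleton, Set.mem_ofPred_eq, Set.mem_union]
  constructor
  · rintro ⟨V, hV | rfl, ht⟩
    · exact Or.inl ⟨V, hV, ht⟩
    · exact Or.inr ht
  · rintro (⟨V, hV, ht⟩ | ht)
    · exact ⟨V, Or.inl hV, ht⟩
    · exact ⟨U, Or.inr rfl, ht⟩

lemma stepSeqFrom_snoc {N : Net α} {M : Set α} {σ : List (Set α)} {U M'' : Set α} :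
    StepSeqFrom N M (σ ++ [U]) M'' ↔
      ∃ M', StepSeqFrom N M σ M' ∧ StepTrans N M' U M'' := by
  induction σ generalizing M with
  | nil =>
    constructor
    · intro h
      cases h with
      | cons h1 h2 =>
        cases h2
        exact ⟨M, .nil M, h1⟩
    · rintro ⟨M', h1, h2⟩
      cases h1
      exact .cons h2 (.nil _)
  | cons V σ ih =>
    constructor
    · intro h
      cases h with
      | cons h1 h2 =>
        obtain ⟨M', h3, h4⟩ := ih.1 h2
        exact ⟨M', .cons h1 h3, h4⟩
    · rintro ⟨M', h1, h2⟩
      cases h1 with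
      | cons h3 h4 => exact .cons h3 (ih.2 ⟨M', h4, h2⟩)

lemma flow_trans_left {N : Net α} (h : N.IsAcyclicNet) {t p : α} (ht : t ∈ N.transitions)
    (hf : N.flow t p) : p ∈ N.places := by
  rcases h.2.2.2.1 t p hf with ⟨h1, _⟩ | ⟨_, h2⟩
  · exact absurd ht (Set.disjoint_left.1 h.2.2.1 h1)
  · exact h2

lemma flow_place_right {N : Net α} (h : N.IsAcyclicNet) {t p : α} (hp : p ∈ N.places)
    (hf : N.flow t p) : t ∈ N.transitions := by
  rcases h.2.2.2.1 t p hf with ⟨_, h1⟩ | ⟨h2, _⟩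
  · exact absurd h1 (Set.disjoint_left.1 h.2.2.1 hp)
  · exact h2

lemma flow_place_left {N : Net α} (h : N.IsAcyclicNet) {t p : α} (hp : p ∈ N.places)
    (hf : N.flow p t) : t ∈ N.transitions := by
  rcases h.2.2.2.1 p t hf with ⟨_, h1⟩ | ⟨h2, _⟩
  · exact h1
  · exact absurd h2 (Set.disjoint_left.1 h.2.2.1 hp)

lemma not_flow_init {N : Net α} {t p : α} (hp : p ∈ N.initMarking) : ¬ N.flow t p := by
  intro hf
  have h2 : N.pre p = ∅ := hp.2
  have h3 : t ∈ N.pre p := hf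
  rw [h2] at h3
  exact h3

/-- The last step of a step sequence has postset disjoint from all the earlier ones. -/
lemma wf_snoc {N : Net α} {σ : List (Set α)} {U : Set α} (hw : N.WellFormedSeq (σ ++ [U]))
    {t u p : α} (ht : t ∈ transOf σ) (hu : u ∈ U) (h1 : N.flow t p) (h2 : N.flow u p) :
    False := by
  obtain ⟨V, hV, htV⟩ := ht
  have h3 := (List.pairwise_append.1 hw.2).2.2 V hV U (by simp)
  have h4 : p ∈ N.postSet V ∩ N.postSet U :=
    ⟨mem_postSet.2 ⟨t, htV, h1⟩, mem_postSet.2 ⟨u, hu, h2⟩⟩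
  rw [h3] at h4
  exact h4

lemma invariant {N : Net α} (hwf : N.WellFormedNet) (σ : List (Set α)) :
    ∀ M, StepSeqFrom N N.initMarking σ M →
      transOf σ ⊆ N.transitions ∧
      N.preSet (transOf σ) ⊆ N.initMarking ∪ N.postSet (transOf σ) ∧
      M = (N.initMarking ∪ N.postSet (transOf σ)) \ N.preSet (transOf σ) ∧
      (∀ t ∈ transOf σ, ∀ u ∈ transOf σ, ∀ p, N.flow p t → N.flow p u → t = u) ∧
      (∀ t ∈ transOf σ, ∀ u ∈ transOf σ, ∀ p, N.flow t p → N.flow u p → t = u) := by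
  induction σ using List.reverseRecOn with
  | nil =>
    intro M hM
    cases hM
    simp [transOf, preSet, postSet]
  | append_singleton σ U ih =>
    intro M hM
    have hw := hwf.2 _ ⟨M, hM⟩
    obtain ⟨M', h1, ⟨⟨⟨hne, hUt, hUd⟩, hpre⟩, rfl⟩⟩ := stepSeqFrom_snoc.1 hM
    obtain ⟨i1, i2, i3, i4, i5⟩ := ih M' h1
    have hpre' : ∀ u ∈ U, ∀ p, N.flow p u →
        p ∈ N.initMarking ∪ N.postSet (transOf σ) ∧ p ∉ N.preSet (transOf σ) := by
      intro u hu p hp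
      have := hpre (mem_preSet.2 ⟨u, hu, hp⟩)
      rw [i3] at this
      exact this
    rw [transOf_append]
    refine ⟨Set.union_subset i1 hUt, ?_, ?_, ?_, ?_⟩
    · intro p hp
      have key : p ∈ N.initMarking ∪ N.postSet (transOf σ) := by
        obtain ⟨t, ht | ht, hf⟩ := mem_preSet.1 hp
        · exact i2 (mem_preSet.2 ⟨t, ht, hf⟩)
        · exact (hpre' t ht p hf).1
      rcases key with key | key
      · exact Or.inl key
      · obtain ⟨t, ht, hf⟩ := mem_postSet.1 key
        exact Or.inr (mem_postSet.2 ⟨t, Or.inl ht, hf⟩)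
    · ext p
      rw [i3]
      constructor
      · rintro ⟨⟨h1 | h1, h2⟩ | h1, h3⟩
        · refine ⟨Or.inl h1, fun h4 => ?_⟩
          obtain ⟨t, ht | ht, hf⟩ := mem_preSet.1 h4
          · exact h2 (mem_preSet.2 ⟨t, ht, hf⟩)
          · exact h3 (mem_preSet.2 ⟨t, ht, hf⟩)
        · obtain ⟨s, hs, hfs⟩ := mem_postSet.1 h1
          refine ⟨Or.inr (mem_postSet.2 ⟨s, Or.inl hs, hfs⟩), fun h4 => ?_⟩
          obtain ⟨t, ht | ht, hf⟩ := mem_preSet.1 h4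
          · exact h2 (mem_preSet.2 ⟨t, ht, hf⟩)
          · exact h3 (mem_preSet.2 ⟨t, ht, hf⟩)
        · obtain ⟨s, hs, hfs⟩ := mem_postSet.1 h1
          refine ⟨Or.inr (mem_postSet.2 ⟨s, Or.inr hs, hfs⟩), fun h4 => ?_⟩
          obtain ⟨t, ht | ht, hf⟩ := mem_preSet.1 h4
          · rcases i2 (mem_preSet.2 ⟨t, ht, hf⟩) with h5 | h5
            · exact not_flow_init h5 hfs
            · obtain ⟨r, hr, hfr⟩ := mem_postSet.1 h5
              exact wf_snoc hw hr hs hfr hfs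
          · exact h3 (mem_preSet.2 ⟨t, ht, hf⟩)
      · rintro ⟨h1, h2⟩
        have h3 : p ∉ N.preSet (transOf σ) := fun h => by
          obtain ⟨t, ht, hf⟩ := mem_preSet.1 h
          exact h2 (mem_preSet.2 ⟨t, Or.inl ht, hf⟩)
        have h4 : p ∉ N.preSet U := fun h => by
          obtain ⟨t, ht, hf⟩ := mem_preSet.1 h
          exact h2 (mem_preSet.2 ⟨t, Or.inr ht, hf⟩)
        refine ⟨?_, h4⟩
        rcases h1 with h1 | h1
        · exact Or.inl ⟨Or.inl h1, h3⟩
        · obtain ⟨s, hs | hs, hfs⟩ := mem_postSet.1 h1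
          · exact Or.inl ⟨Or.inr (mem_postSet.2 ⟨s, hs, hfs⟩), h3⟩
          · exact Or.inr (mem_postSet.2 ⟨s, hs, hfs⟩)
    · rintro t (ht | ht) u (hu | hu) p hpt hpu
      · exact i4 t ht u hu p hpt hpu
      · exact absurd (mem_preSet.2 ⟨t, ht, hpt⟩) (hpre' u hu p hpu).2
      · exact absurd (mem_preSet.2 ⟨u, hu, hpu⟩) (hpre' t ht p hpt).2
      · by_contra hne
        have h5 : p ∈ N.pre t ∩ N.pre u := ⟨hpt, hpu⟩
        rw [hUd t ht u hu hne] at h5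
        exact h5
    · rintro t (ht | ht) u (hu | hu) p hpt hpu
      · exact i5 t ht u hu p hpt hpu
      · exact (wf_snoc hw ht hu hpt hpu).elim
      · exact (wf_snoc hw hu ht hpu hpt).elim
      · by_contra hne
        have h5 : p ∈ N.post t ∩ N.post u := ⟨hpt, hpu⟩
        rw [hw.1 U (by simp) t ht u hu hne] at h5
        exact h5

lemma init_nonempty {N : Net α} (h : N.IsAcyclicNet) (hwf : N.WellFormedNet) :
    N.initMarking.Nonempty := by
  obtain ⟨p, hp⟩ := h.2.2.2.2.1
  by_cases hpre : N.pre p = ∅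
  · exact ⟨p, hp, hpre⟩
  · obtain ⟨t, ht⟩ := Set.nonempty_iff_ne_empty.2 hpre
    obtain ⟨σ, ⟨M, hσ⟩, htσ⟩ := hwf.1 t (flow_place_right h hp ht)
    cases hσ with
    | nil => obtain ⟨U, hU, _⟩ := htσ; simp at hU
    | cons h1 h2 =>
      obtain ⟨⟨⟨⟨u, hu⟩, hUt, _⟩, hpr⟩, _⟩ := h1
      obtain ⟨q, hq⟩ := (h.2.2.2.2.2.2 u (hUt hu)).1
      exact ⟨q, hpr (mem_preSet.2 ⟨u, hu, hq⟩)⟩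

lemma induced_scenario {N : Net α} (h : N.IsAcyclicNet) (hwf : N.WellFormedNet)
    {σ : List (Set α)} (hσ : σ ∈ N.sseq) : N.inducedScenario σ ∈ N.scenarios := by
  obtain ⟨M, hM⟩ := hσ
  obtain ⟨i1, i2, i3, i4, i5⟩ := invariant hwf σ M hM
  have hpl : N.initMarking ∪ N.postSet (transOf σ) ⊆ N.places := by
    rintro p (hp | hp)
    · exact hp.1
    · obtain ⟨t, ht, hf⟩ := mem_postSet.1 hp
      exact flow_trans_left h (i1 ht) hf
  have hne : (N.initMarking ∪ N.postSet (transOf σ)).Nonempty :=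
    (init_nonempty h hwf).mono Set.subset_union_left
  have hpreT : ∀ t ∈ transOf σ, (N.inducedScenario σ).pre t = N.pre t := by
    intro t ht
    ext p
    exact ⟨fun hp => hp.1, fun hp => ⟨hp, Or.inl ⟨i2 (mem_preSet.2 ⟨t, ht, hp⟩), ht⟩⟩⟩
  have hpostT : ∀ t ∈ transOf σ, (N.inducedScenario σ).post t = N.post t := by
    intro t ht
    ext p
    exact ⟨fun hp => hp.1,
      fun hp => ⟨hp, Or.inr ⟨ht, Or.inr (mem_postSet.2 ⟨t, ht, hp⟩)⟩⟩⟩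
  have hdisj : Disjoint (N.initMarking ∪ N.postSet (transOf σ)) (transOf σ) :=
    h.2.2.1.mono hpl i1
  refine ⟨⟨⟨h.1.subset hpl, h.2.1.subset i1, hdisj, fun x y hf => hf.2, hne, ?_, ?_⟩, ?_⟩,
    ⟨hne, hpl, i1, fun x y => Iff.rfl, fun t ht => ⟨hpreT t ht, hpostT t ht⟩⟩, ?_⟩
  · intro x hx
    exact h.2.2.2.2.2.1 x (Relation.TransGen.mono (r := (N.inducedScenario σ).flow) (p := N.flow)
      (fun a b hab => hab.1) x x hx)
  · intro t ht
    rw [hpreT t ht, hpostT t ht]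
    exact h.2.2.2.2.2.2 t (i1 ht)
  · intro p hp
    constructor
    · rintro t ⟨ht, ht1 | ht1⟩ u ⟨hu, hu1 | hu1⟩
      · exact absurd ht1.2 (Set.disjoint_left.1 hdisj hp)
      · exact absurd ht1.2 (Set.disjoint_left.1 hdisj hp)
      · exact absurd hu1.2 (Set.disjoint_left.1 hdisj hp)
      · exact i5 t ht1.1 u hu1.1 p ht hu
    · rintro t ⟨ht, ht1 | ht1⟩ u ⟨hu, hu1 | hu1⟩
      · exact i4 t ht1.2 u hu1.2 p ht hu
      · exact absurd hu1.1 (Set.disjoint_left.1 hdisj hp)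
      · exact absurd ht1.1 (Set.disjoint_left.1 hdisj hp)
      · exact absurd ht1.1 (Set.disjoint_left.1 hdisj hp)
  · ext p
    constructor
    · rintro ⟨hp | hp, hq⟩
      · exact hp
      · obtain ⟨t, ht, hf⟩ := mem_postSet.1 hp
        have h6 : t ∈ (N.inducedScenario σ).pre p := ⟨hf, Or.inr ⟨ht, Or.inr hp⟩⟩
        rw [hq] at h6
        exact h6.elim
    · intro hp
      refine ⟨Or.inl hp, Set.eq_empty_of_forall_notMem fun t ht => ?_⟩
      exact not_flow_init hp ht.1

lemma scenario_places {N S : Net α} (hS : S ∈ N.scenarios) :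
    S.places = N.initMarking ∪ N.postSet S.transitions := by
  obtain ⟨⟨hA, hO⟩, ⟨hne, hpl, htr, hfl, hpp⟩, hin⟩ := hS
  ext p
  constructor
  · intro hp
    by_cases hpre : S.pre p = ∅
    · left
      have : p ∈ S.initPlaces := ⟨hp, hpre⟩
      rw [hin] at this
      exact this
    · right
      obtain ⟨t, ht⟩ := Set.nonempty_iff_ne_empty.2 hpre
      exact mem_postSet.2 ⟨t, flow_place_right hA hp ht, ((hfl t p).1 ht).1⟩
  · rintro (hp | hp)
    · have h1 : p ∈ N.initPlaces := hp
      rw [← hin] at h1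
      exact h1.1
    · obtain ⟨t, ht, hf⟩ := mem_postSet.1 hp
      have h1 : p ∈ N.post t := hf
      rw [← (hpp t ht).2] at h1
      exact flow_trans_left hA ht h1

lemma scenario_eq {N S : Net α} (hS : S ∈ N.scenarios) {σ : List (Set α)}
    (hσ : transOf σ = S.transitions) : S = N.inducedScenario σ := by
  have hp := scenario_places hS
  obtain ⟨_, ⟨_, _, _, hfl, _⟩, _⟩ := hS
  have hfl' : S.flow = fun x y => N.flow x y ∧
    ((x ∈ S.places ∧ y ∈ S.transitions) ∨ (x ∈ S.transitions ∧ y ∈ S.places)) := by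
    funext x y
    exact propext (hfl x y)
  obtain ⟨P, T, F⟩ := S
  simp only at hp hfl' hσ
  subst hσ
  subst hp
  subst hfl'
  rfl

/-- A step sequence staying strictly inside a scenario can be extended inside it. -/
lemma extend {N S : Net α} (h : N.IsAcyclicNet) (hwf : N.WellFormedNet)
    (hS : S ∈ N.scenarios) {σ : List (Set α)} (hσ : σ ∈ N.sseq)
    (hsub : transOf σ ⊆ S.transitions) (hne : transOf σ ≠ S.transitions) :
    ∃ t ∈ S.transitions, t ∉ transOf σ ∧ σ ++ [{t}] ∈ N.sseq := by
  have hp := scenario_places hS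
  obtain ⟨⟨hA, hO⟩, ⟨_, _, htr, hfl, hpp⟩, _⟩ := hS
  obtain ⟨M, hM⟩ := hσ
  obtain ⟨i1, i2, i3, i4, i5⟩ := invariant hwf σ M hM
  have hfin : (S.transitions \ transOf σ).Finite := hA.2.1.subset Set.sdiff_subset
  have hnon : (S.transitions \ transOf σ).Nonempty := by
    rw [Set.nonempty_iff_ne_empty]
    intro he
    exact hne (hsub.antisymm (Set.sdiff_eq_empty.1 he))
  have : Std.Irrefl (Relation.TransGen N.flow) := ⟨h.2.2.2.2.2.1⟩
  have : IsTrans α (Relation.TransGen N.flow) := ⟨fun _ _ _ => Relation.TransGen.trans⟩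
  have : IsStrictOrder α (Relation.TransGen N.flow) := {}
  have hwo := hfin.wellFoundedOn (r := Relation.TransGen N.flow)
  obtain ⟨⟨t, ht, htn⟩, -, hmin⟩ := hwo.has_min Set.univ ⟨⟨hnon.some, hnon.some_mem⟩, trivial⟩
  refine ⟨t, ht, htn, (M ∪ N.postSet {t}) \ N.preSet {t}, stepSeqFrom_snoc.2 ⟨M, hM, ?_, rfl⟩⟩
  refine ⟨⟨Set.singleton_nonempty t, by simpa using htr ht, ?_⟩, ?_⟩
  · rintro a rfl b rfl hab
    exact absurd rfl hab
  · intro p hpt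
    obtain ⟨t', rfl, hf⟩ := mem_preSet.1 hpt
    have hfS : p ∈ S.pre t' := by
      rw [(hpp t' ht).1]
      exact hf
    have hpS : p ∈ S.places := by
      rcases hA.2.2.2.1 p t' hfS with ⟨h1, _⟩ | ⟨_, h2⟩
      · exact h1
      · exact absurd ht (Set.disjoint_left.1 hA.2.2.1 h2)
    rw [i3]
    refine ⟨?_, fun hq => ?_⟩
    · have h1 := hpS
      rw [hp] at h1
      rcases h1 with h1 | h1
      · exact Or.inl h1
      · obtain ⟨u, hu, hfu⟩ := mem_postSet.1 h1
        right
        by_cases hun : u ∈ transOf σ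
        · exact mem_postSet.2 ⟨u, hun, hfu⟩
        · exact absurd (Relation.TransGen.tail (.single hfu) hf)
            (hmin ⟨u, hu, hun⟩ trivial)
    · obtain ⟨u, hu, hfu⟩ := mem_preSet.1 hq
      have h2 : p ∈ S.pre u := by
        rw [(hpp u (hsub hu)).1]
        exact hfu
      have := (hO p hpS).2 hfS h2
      subst this
      exact htn hu

lemma scenario_linearize {N S : Net α} (h : N.IsAcyclicNet) (hwf : N.WellFormedNet)
    (hS : S ∈ N.scenarios) : ∃ σ ∈ N.sseq, transOf σ = S.transitions := by
  have hfin : {A : Set α | A ⊆ S.transitions ∧ ∃ σ ∈ N.sseq, transOf σ = A}.Finite :=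
    (hS.1.1.2.1.finite_subsets).subset fun A hA => hA.1
  have hne : {A : Set α | A ⊆ S.transitions ∧ ∃ σ ∈ N.sseq, transOf σ = A}.Nonempty :=
    ⟨∅, Set.empty_subset _, [], ⟨_, .nil _⟩, by simp [transOf]⟩
  obtain ⟨A, ⟨hA, σ, hσ, rfl⟩, hmax⟩ := hfin.exists_maximal hne
  refine ⟨σ, hσ, ?_⟩
  by_contra hcon
  obtain ⟨t, ht, htn, hext⟩ := extend h hwf hS hσ hA hcon
  have h1 := hmax (y := transOf (σ ++ [{t}])) ⟨by
    rw [transOf_append]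
    exact Set.union_subset hA (by simpa using ht), _, hext, rfl⟩ (by
    rw [transOf_append]
    exact Set.subset_union_left)
  rw [transOf_append] at h1
  exact htn (h1 (Or.inr rfl))

lemma scenarios_eq {N : Net α} (h : N.IsAcyclicNet) (hwf : N.WellFormedNet) :
    N.scenarios = N.inducedScenario '' N.sseq := by
  ext S
  constructor
  · intro hS
    obtain ⟨σ, hσ, hT⟩ := scenario_linearize h hwf hS
    exact ⟨σ, hσ, (scenario_eq hS hT).symm⟩
  · rintro ⟨σ, hσ, rfl⟩
    exact induced_scenario h hwf hσ

lemma coInitial_of_subset {N S S' : Net α} (hS : S ∈ N.scenarios) (hS' : S' ∈ N.scenarios)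
    (hT : S.transitions ⊆ S'.transitions) : CoInitial S S' := by
  have hpl : S.places ⊆ S'.places := by
    rw [scenario_places hS, scenario_places hS']
    rintro p (hp | hp)
    · exact Or.inl hp
    · obtain ⟨t, ht, hf⟩ := mem_postSet.1 hp
      exact Or.inr (mem_postSet.2 ⟨t, hT ht, hf⟩)
  obtain ⟨_, ⟨hne, _, _, hfl, hpp⟩, hin⟩ := hS
  obtain ⟨_, ⟨_, _, _, hfl', hpp'⟩, hin'⟩ := hS'
  refine ⟨⟨hne, hpl, hT, fun x y => ?_, fun t ht => ?_⟩, hin.trans hin'.symm⟩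
  · rw [hfl, hfl']
    constructor
    · rintro ⟨h1, h2⟩
      refine ⟨⟨h1, ?_⟩, h2⟩
      rcases h2 with h2 | h2
      · exact Or.inl ⟨hpl h2.1, hT h2.2⟩
      · exact Or.inr ⟨hT h2.1, hpl h2.2⟩
    · rintro ⟨⟨h1, _⟩, h2⟩
      exact ⟨h1, h2⟩
  · exact ⟨(hpp t ht).1.trans (hpp' t (hT ht)).1.symm,
      (hpp t ht).2.trans (hpp' t (hT ht)).2.symm⟩

lemma maxscenarios_eq {N : Net α} (h : N.IsAcyclicNet) (hwf : N.WellFormedNet) :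
    N.maxscenarios = N.inducedScenario '' N.maxsseq := by
  ext S
  constructor
  · rintro ⟨hS, hmax⟩
    obtain ⟨σ, hσ, hT⟩ := scenario_linearize h hwf hS
    refine ⟨σ, ⟨hσ, ?_⟩, (scenario_eq hS hT).symm⟩
    rintro ⟨U, hU⟩
    have hS' := induced_scenario h hwf hU
    have hTr : (N.inducedScenario (σ ++ [U])).transitions = transOf σ ∪ U := transOf_append σ U
    refine hmax ⟨_, hS', ?_, coInitial_of_subset hS hS' ?_⟩
    · intro heq
      obtain ⟨M, hM⟩ := hU
      obtain ⟨M', h1, ⟨⟨⟨⟨u, hu⟩, hUt, hUd⟩, hpre⟩, _⟩⟩ := stepSeqFrom_snoc.1 hM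
      rw [heq, ← hT] at hTr
      have hu' : u ∈ transOf σ := by
        rw [hTr]
        exact Or.inr hu
      obtain ⟨p, hp⟩ := (h.2.2.2.2.2.2 u (hUt hu)).2
      exact wf_snoc (hwf.2 _ ⟨M, hM⟩) hu' hu hp hp
    · rw [hTr, hT]
      exact Set.subset_union_left
  · rintro ⟨σ, ⟨hσ, hmax⟩, rfl⟩
    refine ⟨induced_scenario h hwf hσ, ?_⟩
    rintro ⟨S', hS', hne, hco⟩
    by_cases hT : transOf σ = S'.transitions
    · exact hne (scenario_eq hS' hT)
    · obtain ⟨t, _, _, hext⟩ := extend h hwf hS' hσ hco.1.2.2.1 hT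
      exact hmax ⟨_, hext⟩

end Net

/-- For a well-formed acyclic net:
(1) `scenarios(AN) = scenario_AN(sseq(AN))`; and
(2) `maxscenarios(AN) = scenario_AN(maxsseq(AN))`. -/
theorem stmt16 {α : Type*} (N : Net α) (h : N.IsAcyclicNet) (hwf : N.WellFormedNet) :
    N.scenarios = N.inducedScenario '' N.sseq ∧
    N.maxscenarios = N.inducedScenario '' N.maxsseq := by
  exact ⟨Net.scenarios_eq h hwf, Net.maxscenarios_eq h hwf⟩
end
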